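/- Set b(p) := √(λ̄ − 2Γ(p)) (so b(0) = √λ̄) and assume μ̄ > 0 and λ̄ ≥ λ₀. Suppose z : [p₀,0] → ℝ is C¹ with z(p₀) = 0, z′(p₀) = 1, p ↦ b(p)³z′(p) is differentiable on (p₀,0) with derivative μ̄·b·z, and λ̄^{3/2}·z′(0) = (g + σμ̄)·z(0). Suppose w : [p₀,0] → ℝ is C¹ with w(p₀) = w′(p₀) = 0 and p ↦ b(p)³w′(p) is differentiable on (p₀,0) with derivative μ̄·b·w + b·z. Then λ̄^{3/2}·w′(0) − σ·z(0) − (g + σμ̄)·w(0) < 0. -/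

import Mathlib

open Set

/-!
Write `ρ = b³`, `κ = b`. Green's formula for the Sturm–Liouville operator `u ↦ (ρ u')'`, applied to
the pair `(w, z)` and to `(z, z)`, gives
`[ρ (w' z - z' w)] = ∫ κ z²` and `μ ∫ κ z² = [ρ z' z] - ∫ ρ z'²`.
With the boundary condition for `z`, the quantity `X` to be estimated therefore satisfies
`μ z(0) X = g z(0)² - ∫ ρ z'²`. The Cauchy–Schwarz inequality for `z(0) = ∫ ρ⁻¹ (ρ z')` and
`g ∫ ρ⁻¹ ≤ 1` make the right-hand side negative; the inequality is strict because `z > 0` forces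
the flux `ρ z'` to increase strictly.
-/

section Integral

variable {a b : ℝ} {f g κ : ℝ → ℝ}

theorem integral_inv_le_integral_inv_of_le (hab : a ≤ b) (hf : ContinuousOn f (Icc a b))
    (hg : ContinuousOn g (Icc a b)) (hpos : ∀ x ∈ Icc a b, 0 < f x)
    (hle : ∀ x ∈ Icc a b, f x ≤ g x) :
    ∫ x in a..b, (g x)⁻¹ ≤ ∫ x in a..b, (f x)⁻¹ := by
  have hg0 : ∀ x ∈ Icc a b, g x ≠ 0 := fun x hx ↦ ((hpos x hx).trans_le (hle x hx)).ne'
  exact intervalIntegral.integral_mono_on hab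
    ((hg.inv₀ hg0).intervalIntegrable_of_Icc hab)
    ((hf.inv₀ fun x hx ↦ (hpos x hx).ne').intervalIntegrable_of_Icc hab)
    fun x hx ↦ inv_anti₀ (hpos x hx) (hle x hx)

theorem integral_mul_sub_sq (hab : a ≤ b) (hκ : ContinuousOn κ (Icc a b))
    (hf : ContinuousOn f (Icc a b)) (c : ℝ) :
    ∫ x in a..b, κ x * (f x - c) ^ 2 =
      (∫ x in a..b, κ x * f x ^ 2) - 2 * c * (∫ x in a..b, κ x * f x) +
        c ^ 2 * ∫ x in a..b, κ x := by
  have hi₂ : IntervalIntegrable (fun x ↦ κ x * f x ^ 2) MeasureTheory.volume a b :=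
    (hκ.mul (hf.pow 2)).intervalIntegrable_of_Icc hab
  have hi₁ : IntervalIntegrable (fun x ↦ κ x * f x) MeasureTheory.volume a b :=
    (hκ.mul hf).intervalIntegrable_of_Icc hab
  have hi₀ : IntervalIntegrable κ MeasureTheory.volume a b := hκ.intervalIntegrable_of_Icc hab
  rw [← intervalIntegral.integral_const_mul, ← intervalIntegral.integral_const_mul,
    ← intervalIntegral.integral_sub hi₂ (hi₁.const_mul _),
    ← intervalIntegral.integral_add (hi₂.sub (hi₁.const_mul _)) (hi₀.const_mul _)]
  congr with x
  ring

theorem sq_integral_mul_lt_integral_mul_integral_mul_sq (hab : a < b)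
    (hκ : ContinuousOn κ (Icc a b)) (hκpos : ∀ x ∈ Icc a b, 0 < κ x)
    (hf : ContinuousOn f (Icc a b)) (hne : (f '' Icc a b).Nontrivial) :
    (∫ x in a..b, κ x * f x) ^ 2 < (∫ x in a..b, κ x) * ∫ x in a..b, κ x * f x ^ 2 := by
  have hmass : 0 < ∫ x in a..b, κ x :=
    intervalIntegral.integral_pos hab hκ (fun x hx ↦ (hκpos x (Ioc_subset_Icc_self hx)).le)
      ⟨a, left_mem_Icc.2 hab.le, hκpos a (left_mem_Icc.2 hab.le)⟩
  set mean := (∫ x in a..b, κ x * f x) / ∫ x in a..b, κ x with hmean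
  have hvariance : 0 < ∫ x in a..b, κ x * (f x - mean) ^ 2 := by
    obtain ⟨_, ⟨x, hx, rfl⟩, hfx⟩ := hne.exists_ne mean
    exact intervalIntegral.integral_pos hab (hκ.mul ((hf.sub continuousOn_const).pow 2))
      (fun y hy ↦ mul_nonneg (hκpos y (Ioc_subset_Icc_self hy)).le (sq_nonneg _))
      ⟨x, hx, mul_pos (hκpos x hx) (sq_pos_of_ne_zero (sub_ne_zero.2 hfx))⟩
  have hexpand : (∫ x in a..b, κ x) * ∫ x in a..b, κ x * (f x - mean) ^ 2 =
      (∫ x in a..b, κ x) * (∫ x in a..b, κ x * f x ^ 2) - (∫ x in a..b, κ x * f x) ^ 2 := by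
    rw [integral_mul_sub_sq hab.le hκ hf, hmean]
    field_simp
    ring
  rw [← sub_pos, ← hexpand]
  exact mul_pos hmass hvariance

theorem sq_sub_lt_integral_inv_mul_integral_deriv_mul_flux {ρ u u' : ℝ → ℝ} (hab : a < b)
    (hρ : ContinuousOn ρ (Icc a b)) (hρpos : ∀ x ∈ Icc a b, 0 < ρ x)
    (hu : ContinuousOn u (Icc a b)) (hu' : ContinuousOn u' (Icc a b))
    (hderiv : ∀ x ∈ Ioo a b, HasDerivAt u (u' x) x)
    (hne : ((fun x ↦ ρ x * u' x) '' Icc a b).Nontrivial) :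
    (u b - u a) ^ 2 < (∫ x in a..b, (ρ x)⁻¹) * ∫ x in a..b, u' x * (ρ x * u' x) := by
  have hρ0 : ∀ x ∈ Icc a b, ρ x ≠ 0 := fun x hx ↦ (hρpos x hx).ne'
  have hincrement : ∫ x in a..b, (ρ x)⁻¹ * (ρ x * u' x) = u b - u a := by
    rw [← intervalIntegral.integral_eq_sub_of_hasDerivAt_of_le hab.le hu hderiv
      (hu'.intervalIntegrable_of_Icc hab.le)]
    refine intervalIntegral.integral_congr fun x hx ↦ ?_
    rw [uIcc_of_le hab.le] at hx
    exact inv_mul_cancel_left₀ (hρ0 x hx) _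
  have henergy : ∫ x in a..b, (ρ x)⁻¹ * (ρ x * u' x) ^ 2 =
      ∫ x in a..b, u' x * (ρ x * u' x) := by
    refine intervalIntegral.integral_congr fun x hx ↦ ?_
    rw [uIcc_of_le hab.le] at hx
    have := hρ0 x hx
    field_simp
  rw [← hincrement, ← henergy]
  exact sq_integral_mul_lt_integral_mul_integral_mul_sq hab (hρ.inv₀ hρ0)
    (fun x hx ↦ inv_pos.2 (hρpos x hx)) (hρ.mul hu') hne

theorem mul_sq_sub_lt_integral_deriv_mul_flux {ρ u u' : ℝ → ℝ} {k : ℝ} (hab : a < b)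
    (hρ : ContinuousOn ρ (Icc a b)) (hρpos : ∀ x ∈ Icc a b, 0 < ρ x)
    (hu : ContinuousOn u (Icc a b)) (hu' : ContinuousOn u' (Icc a b))
    (hderiv : ∀ x ∈ Ioo a b, HasDerivAt u (u' x) x)
    (hne : ((fun x ↦ ρ x * u' x) '' Icc a b).Nontrivial)
    (hk : k * ∫ x in a..b, (ρ x)⁻¹ ≤ 1) :
    k * (u b - u a) ^ 2 < ∫ x in a..b, u' x * (ρ x * u' x) := by
  have hmass : 0 ≤ ∫ x in a..b, (ρ x)⁻¹ :=
    intervalIntegral.integral_nonneg hab.le fun x hx ↦ (inv_pos.2 (hρpos x hx)).le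
  refine lt_of_mul_lt_mul_left ?_ hmass
  calc (∫ x in a..b, (ρ x)⁻¹) * (k * (u b - u a) ^ 2)
      = (k * ∫ x in a..b, (ρ x)⁻¹) * (u b - u a) ^ 2 := by ring
    _ ≤ (u b - u a) ^ 2 := mul_le_of_le_one_left (sq_nonneg _) hk
    _ < (∫ x in a..b, (ρ x)⁻¹) * ∫ x in a..b, u' x * (ρ x * u' x) :=
      sq_sub_lt_integral_inv_mul_integral_deriv_mul_flux hab hρ hρpos hu hu' hderiv hne

end Integral

/-- `u` is a `C¹` function on `[a, b]`, with derivative `u'`, solving the Sturm–Liouville equation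
`(ρ u')' = f` on `(a, b)`. The derivative is part of the data, so that its one-sided values at `a`
and `b` can enter boundary conditions; `f` may involve `u` itself. -/
structure IsSturmLiouvilleSolution (ρ f u u' : ℝ → ℝ) (a b : ℝ) : Prop where
  hasDerivWithinAt : ∀ x ∈ Icc a b, HasDerivWithinAt u (u' x) (Icc a b) x
  continuousOn_deriv : ContinuousOn u' (Icc a b)
  hasDerivAt_flux : ∀ x ∈ Ioo a b, HasDerivAt (fun s ↦ ρ s * u' s) (f x) x

namespace IsSturmLiouvilleSolution

variable {a b : ℝ} {ρ f h u u' v v' : ℝ → ℝ}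

theorem continuousOn (hu : IsSturmLiouvilleSolution ρ f u u' a b) : ContinuousOn u (Icc a b) :=
  fun x hx ↦ (hu.hasDerivWithinAt x hx).continuousWithinAt

theorem hasDerivAt (hu : IsSturmLiouvilleSolution ρ f u u' a b) :
    ∀ x ∈ Ioo a b, HasDerivAt u (u' x) x :=
  fun x hx ↦ (hu.hasDerivWithinAt x (Ioo_subset_Icc_self hx)).hasDerivAt (Icc_mem_nhds hx.1 hx.2)

theorem restrict_right (hu : IsSturmLiouvilleSolution ρ f u u' a b) {c : ℝ} (hc : c ≤ b) :
    IsSturmLiouvilleSolution ρ f u u' a c where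
  hasDerivWithinAt x hx :=
    (hu.hasDerivWithinAt x (Icc_subset_Icc_right hc hx)).mono (Icc_subset_Icc_right hc)
  continuousOn_deriv := hu.continuousOn_deriv.mono (Icc_subset_Icc_right hc)
  hasDerivAt_flux x hx := hu.hasDerivAt_flux x (Ioo_subset_Ioo_right hc hx)

theorem integral_mul_eq_sub_integral_deriv_mul_flux (hu : IsSturmLiouvilleSolution ρ f u u' a b)
    (hab : a ≤ b) (hρ : ContinuousOn ρ (Icc a b)) (hf : ContinuousOn f (Icc a b))
    (hv : ContinuousOn v (Icc a b)) (hv' : ContinuousOn v' (Icc a b))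
    (hderiv : ∀ x ∈ Ioo a b, HasDerivAt v (v' x) x) :
    ∫ x in a..b, v x * f x = v b * (ρ b * u' b) - v a * (ρ a * u' a) -
      ∫ x in a..b, v' x * (ρ x * u' x) := by
  have hflux : ContinuousOn (fun x ↦ ρ x * u' x) (Icc a b) := hρ.mul hu.continuousOn_deriv
  rw [← uIcc_of_le hab] at hv hflux
  apply intervalIntegral.integral_mul_deriv_eq_deriv_mul_of_hasDerivAt hv hflux
  · simpa only [min_eq_left hab, max_eq_right hab] using hderiv
  · simpa only [min_eq_left hab, max_eq_right hab] using hu.hasDerivAt_flux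
  · exact hv'.intervalIntegrable_of_Icc hab
  · exact hf.intervalIntegrable_of_Icc hab

theorem integral_mul_sub_mul_eq_sub (hu : IsSturmLiouvilleSolution ρ f u u' a b)
    (hv : IsSturmLiouvilleSolution ρ h v v' a b) (hab : a ≤ b) (hρ : ContinuousOn ρ (Icc a b))
    (hf : ContinuousOn f (Icc a b)) (hh : ContinuousOn h (Icc a b)) :
    ∫ x in a..b, (v x * f x - u x * h x) =
      ρ b * (u' b * v b - v' b * u b) - ρ a * (u' a * v a - v' a * u a) := by
  have hsymm : ∫ x in a..b, v' x * (ρ x * u' x) = ∫ x in a..b, u' x * (ρ x * v' x) := by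
    congr with x
    ring
  have hvf : IntervalIntegrable (fun x ↦ v x * f x) MeasureTheory.volume a b :=
    (hv.continuousOn.mul hf).intervalIntegrable_of_Icc hab
  have huh : IntervalIntegrable (fun x ↦ u x * h x) MeasureTheory.volume a b :=
    (hu.continuousOn.mul hh).intervalIntegrable_of_Icc hab
  rw [intervalIntegral.integral_sub hvf huh,
    hu.integral_mul_eq_sub_integral_deriv_mul_flux hab hρ hf hv.continuousOn
      hv.continuousOn_deriv hv.hasDerivAt,
    hv.integral_mul_eq_sub_integral_deriv_mul_flux hab hρ hh hu.continuousOn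
      hu.continuousOn_deriv hu.hasDerivAt, hsymm]
  ring

section Positivity

variable (hu : IsSturmLiouvilleSolution ρ f u u' a b) (hρ : ContinuousOn ρ (Icc a b))
  (hρpos : ∀ x ∈ Icc a b, 0 < ρ x) (hf : ContinuousOn f (Icc a b)) (hua : u a = 0)
  (hua' : 0 < u' a)

include hu hρ hρpos hf hua hua'

theorem mul_flux_pos (hab : a < b) (hfu : ∀ x ∈ Icc a b, 0 ≤ u x * f x) :
    0 < u b * (ρ b * u' b) := by
  have ha : a ∈ Icc a b := left_mem_Icc.2 hab.le
  have hgreen := hu.integral_mul_eq_sub_integral_deriv_mul_flux hab.le hρ hf hu.continuousOn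
    hu.continuousOn_deriv hu.hasDerivAt
  have hpotential : 0 ≤ ∫ x in a..b, u x * f x :=
    intervalIntegral.integral_nonneg hab.le hfu
  have henergy : 0 < ∫ x in a..b, u' x * (ρ x * u' x) := by
    refine intervalIntegral.integral_pos hab
      (hu.continuousOn_deriv.mul (hρ.mul hu.continuousOn_deriv)) (fun x hx ↦ ?_)
      ⟨a, ha, mul_pos hua' (mul_pos (hρpos a ha) hua')⟩
    rw [mul_left_comm]
    exact mul_nonneg (hρpos x (Ioc_subset_Icc_self hx)).le (mul_self_nonneg _)
  rw [hua, zero_mul, sub_zero] at hgreen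
  linarith

theorem deriv_pos (hfu : ∀ x ∈ Icc a b, 0 ≤ u x * f x) : ∀ x ∈ Icc a b, 0 < u' x := by
  intro x hx
  by_contra! hneg
  obtain ⟨y, hy, hy0⟩ := intermediate_value_Icc' hx.1
    (hu.continuousOn_deriv.mono (Icc_subset_Icc_right hx.2)) ⟨hneg, hua'.le⟩
  have hay : a < y := hy.1.lt_of_ne fun hay ↦ hua'.ne' (hay ▸ hy0)
  have hyb : y ≤ b := hy.2.trans hx.2
  have hsub : Icc a y ⊆ Icc a b := Icc_subset_Icc_right hyb
  have hflux := (hu.restrict_right hyb).mul_flux_pos (hρ.mono hsub)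
    (fun s hs ↦ hρpos s (hsub hs)) (hf.mono hsub) hua hua' hay fun s hs ↦ hfu s (hsub hs)
  simp [hy0] at hflux

theorem pos (hfu : ∀ x ∈ Icc a b, 0 ≤ u x * f x) : ∀ x ∈ Ioc a b, 0 < u x := by
  intro x hx
  have hmono : StrictMonoOn u (Icc a b) :=
    strictMonoOn_of_hasDerivWithinAt_pos (convex_Icc a b) hu.continuousOn
      (fun y hy ↦ (hu.hasDerivWithinAt y (interior_subset hy)).mono interior_subset)
      fun y hy ↦ hu.deriv_pos hρ hρpos hf hua hua' hfu y (interior_subset hy)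
  simpa only [hua] using
    hmono (left_mem_Icc.2 (hx.1.le.trans hx.2)) (Ioc_subset_Icc_self hx) hx.1

end Positivity

theorem flux_lt_flux (hu : IsSturmLiouvilleSolution ρ f u u' a b) (hab : a < b)
    (hρ : ContinuousOn ρ (Icc a b)) (hfpos : ∀ x ∈ Ioo a b, 0 < f x) :
    ρ a * u' a < ρ b * u' b := by
  have hmono : StrictMonoOn (fun x ↦ ρ x * u' x) (Icc a b) := by
    refine strictMonoOn_of_hasDerivWithinAt_pos (f' := f) (convex_Icc a b)
      (hρ.mul hu.continuousOn_deriv) (fun x hx ↦ ?_) fun x hx ↦ ?_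
    all_goals rw [interior_Icc] at hx
    · exact (hu.hasDerivAt_flux x hx).hasDerivWithinAt
    · exact hfpos x hx
  exact hmono (left_mem_Icc.2 hab.le) (right_mem_Icc.2 hab.le) hab

theorem integral_mul_eq_wronskian {q r : ℝ → ℝ}
    (hu : IsSturmLiouvilleSolution ρ (fun x ↦ q x * u x + r x) u u' a b)
    (hv : IsSturmLiouvilleSolution ρ (fun x ↦ q x * v x) v v' a b) (hab : a ≤ b)
    (hρ : ContinuousOn ρ (Icc a b)) (hq : ContinuousOn q (Icc a b))
    (hr : ContinuousOn r (Icc a b)) (hua : u a = 0) (hva : v a = 0) :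
    ∫ x in a..b, r x * v x = ρ b * (u' b * v b - v' b * u b) := by
  have hlagrange := hu.integral_mul_sub_mul_eq_sub hv hab hρ
    ((hq.mul hu.continuousOn).add hr) (hq.mul hv.continuousOn)
  simp only [hua, hva, mul_zero, sub_zero] at hlagrange
  rw [← hlagrange]
  congr with x
  ring

theorem mul_integral_mul_self_eq_mul_flux_sub_energy {κ : ℝ → ℝ} {μ : ℝ}
    (hu : IsSturmLiouvilleSolution ρ (fun x ↦ μ * κ x * u x) u u' a b) (hab : a ≤ b)
    (hρ : ContinuousOn ρ (Icc a b)) (hκ : ContinuousOn κ (Icc a b)) (hua : u a = 0) :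
    μ * ∫ x in a..b, κ x * u x * u x =
      u b * (ρ b * u' b) - ∫ x in a..b, u' x * (ρ x * u' x) := by
  have hgreen := hu.integral_mul_eq_sub_integral_deriv_mul_flux hab hρ
    ((continuousOn_const.mul hκ).mul hu.continuousOn) hu.continuousOn hu.continuousOn_deriv
    hu.hasDerivAt
  rw [hua, zero_mul, sub_zero] at hgreen
  rw [← hgreen, ← intervalIntegral.integral_const_mul]
  congr with x
  ring

end IsSturmLiouvilleSolution

theorem stmt_10_general {a b g σ μ : ℝ} {ρ κ z z' w w' : ℝ → ℝ} (hab : a < b) (hμ : 0 < μ)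
    (hρ : ContinuousOn ρ (Icc a b)) (hρpos : ∀ x ∈ Icc a b, 0 < ρ x)
    (hκ : ContinuousOn κ (Icc a b)) (hκpos : ∀ x ∈ Icc a b, 0 < κ x)
    (hg : g * ∫ x in a..b, (ρ x)⁻¹ ≤ 1)
    (hz : IsSturmLiouvilleSolution ρ (fun x ↦ μ * κ x * z x) z z' a b)
    (hza : z a = 0) (hza' : 0 < z' a) (hzb : ρ b * z' b = (g + σ * μ) * z b)
    (hw : IsSturmLiouvilleSolution ρ (fun x ↦ μ * κ x * w x + κ x * z x) w w' a b)
    (hwa : w a = 0) :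
    ρ b * w' b - σ * z b - (g + σ * μ) * w b < 0 := by
  have hμκ : ContinuousOn (fun x ↦ μ * κ x) (Icc a b) := continuousOn_const.mul hκ
  have hzpos : ∀ x ∈ Ioc a b, 0 < z x := by
    refine hz.pos hρ hρpos (hμκ.mul hz.continuousOn) hza hza' fun x hx ↦ ?_
    rw [mul_left_comm]
    exact mul_nonneg (mul_pos hμ (hκpos x hx)).le (mul_self_nonneg _)
  have hflux : ρ a * z' a < ρ b * z' b := hz.flux_lt_flux hab hρ fun x hx ↦
    mul_pos (mul_pos hμ (hκpos x (Ioo_subset_Icc_self hx))) (hzpos x (Ioo_subset_Ioc_self hx))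
  have henergy : g * (z b - z a) ^ 2 < ∫ x in a..b, z' x * (ρ x * z' x) :=
    mul_sq_sub_lt_integral_deriv_mul_flux hab hρ hρpos hz.continuousOn hz.continuousOn_deriv
      hz.hasDerivAt (nontrivial_of_mem_mem_ne (mem_image_of_mem _ (left_mem_Icc.2 hab.le))
        (mem_image_of_mem _ (right_mem_Icc.2 hab.le)) hflux.ne) hg
  have hwronskian := hw.integral_mul_eq_wronskian hz hab.le hρ hμκ (hκ.mul hz.continuousOn) hwa hza
  have hbalance := hz.mul_integral_mul_self_eq_mul_flux_sub_energy hab.le hρ hκ hza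
  have hdefect : μ * z b * (ρ b * w' b - σ * z b - (g + σ * μ) * w b) =
      g * (z b - z a) ^ 2 - ∫ x in a..b, z' x * (ρ x * z' x) := by
    rw [hwronskian, hzb] at hbalance
    rw [hza]
    linear_combination hbalance + μ * w b * hzb
  refine neg_of_mul_neg_right ?_ (mul_pos hμ (hzpos b (right_mem_Ioc.2 hab))).le
  linarith

/-- With `b(p) := √(λ̄ − 2Γ(p))`, `μ̄ > 0`, `λ̄ ≥ λ₀`, if `z` solves
`(b³z′)′ = μ̄ b z` with `z(p₀)=0, z′(p₀)=1` and `λ̄^{3/2} z′(0) = (g+σμ̄) z(0)`, and `w`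
solves `(b³w′)′ = μ̄ b w + b z` with `w(p₀) = w′(p₀) = 0`, then
`λ̄^{3/2} w′(0) − σ z(0) − (g+σμ̄) w(0) < 0`. -/
theorem stmt_10 (p₀ g σ lam₀ lam μ : ℝ) (hp₀ : p₀ < 0) (hg : 0 < g) (hσ : 0 < σ)
    (hμ : 0 < μ)
    (Γ : ℝ → ℝ) (K : NNReal) (hΓ : LipschitzOnWith K Γ (Set.Icc p₀ 0)) (hΓ0 : Γ 0 = 0)
    (hlam₀ : 2 * sSup (Γ '' Set.Icc p₀ 0) < lam₀)
    (hlam₀' : g * ∫ p in p₀..0, (Real.sqrt (lam₀ - 2 * Γ p) ^ 3)⁻¹ = 1)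
    (hlam : lam₀ ≤ lam)
    (z z' w w' : ℝ → ℝ)
    (hz : ∀ p ∈ Set.Icc p₀ 0, HasDerivWithinAt z (z' p) (Set.Icc p₀ 0) p)
    (hzc : ContinuousOn z' (Set.Icc p₀ 0))
    (hz0 : z p₀ = 0) (hz1 : z' p₀ = 1)
    (hzode : ∀ p ∈ Set.Ioo p₀ 0,
      HasDerivAt (fun s => Real.sqrt (lam - 2 * Γ s) ^ 3 * z' s)
        (μ * Real.sqrt (lam - 2 * Γ p) * z p) p)
    (hzbc : Real.sqrt lam ^ 3 * z' 0 = (g + σ * μ) * z 0)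
    (hw : ∀ p ∈ Set.Icc p₀ 0, HasDerivWithinAt w (w' p) (Set.Icc p₀ 0) p)
    (hwc : ContinuousOn w' (Set.Icc p₀ 0))
    (hw0 : w p₀ = 0) (hw1 : w' p₀ = 0)
    (hwode : ∀ p ∈ Set.Ioo p₀ 0,
      HasDerivAt (fun s => Real.sqrt (lam - 2 * Γ s) ^ 3 * w' s)
        (μ * Real.sqrt (lam - 2 * Γ p) * w p + Real.sqrt (lam - 2 * Γ p) * z p) p) :
    Real.sqrt lam ^ 3 * w' 0 - σ * z 0 - (g + σ * μ) * w 0 < 0 := by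
  have hpos : ∀ p ∈ Icc p₀ 0, 0 < lam₀ - 2 * Γ p := fun p hp ↦ by
    linarith [le_csSup (isCompact_Icc.image_of_continuousOn hΓ.continuousOn).bddAbove
      (mem_image_of_mem Γ hp)]
  have hb (l : ℝ) : ContinuousOn (fun p ↦ √(l - 2 * Γ p)) (Icc p₀ 0) :=
    (continuousOn_const.sub (continuousOn_const.mul hΓ.continuousOn)).sqrt
  have hb₀pos : ∀ p ∈ Icc p₀ 0, 0 < √(lam₀ - 2 * Γ p) := fun p hp ↦ Real.sqrt_pos.2 (hpos p hp)
  have hble (p : ℝ) : √(lam₀ - 2 * Γ p) ≤ √(lam - 2 * Γ p) := by gcongr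
  have hbpos : ∀ p ∈ Icc p₀ 0, 0 < √(lam - 2 * Γ p) := fun p hp ↦ (hb₀pos p hp).trans_le (hble p)
  have hmass : g * ∫ p in p₀..0, (√(lam - 2 * Γ p) ^ 3)⁻¹ ≤ 1 := by
    rw [← hlam₀']
    gcongr
    exact integral_inv_le_integral_inv_of_le hp₀.le ((hb lam₀).pow 3) ((hb lam).pow 3)
      (fun p hp ↦ pow_pos (hb₀pos p hp) 3)
      fun p _ ↦ pow_le_pow_left₀ (Real.sqrt_nonneg _) (hble p) 3
  simpa [hΓ0] using stmt_10_general hp₀ hμ ((hb lam).pow 3) (fun p hp ↦ pow_pos (hbpos p hp) 3)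
    (hb lam) hbpos hmass ⟨hz, hzc, hzode⟩ hz0 (hz1 ▸ one_pos) (by simpa [hΓ0] using hzbc)
    ⟨hw, hwc, hwode⟩ hw0
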